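/- arXiv:1812.10789 — 2 statements merged into one kernel-verified Lean document; each statement's English description precedes it below -/
import Mathlib

section
/- Let (X,σ) be a subshift of Σ = A^ℤ with the Cantor metric. Then (X,σ) is mean equicontinuous if and only if the quotient map x ↦ [x], from X to the Besicovitch space ([Σ],D_1), restricted to X is continuous. -/
open Filter Topology Set MeasureTheory
open scoped ENNReal

noncomputable section

/-- The upper density of a set of natural numbers. -/
def upperDensity (E : Set ℕ) : ℝ :=
  Filter.limsup (fun n : ℕ =>
    (∑ k ∈ Finset.range n, E.indicator (fun _ => (1 : ℝ)) k) / n) Filter.atTop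

/-- `S` is an `(f,δ,ν)`-separated subset of `X`, with respect to the distance `ρ`. -/
def IsSepSet {α : Type*} (ρ : α → α → ℝ) (f : α → α) (X : Set α) (δ ν : ℝ) (S : Set α) : Prop :=
  S ⊆ X ∧ ∀ x ∈ S, ∀ y ∈ S, x ≠ y → ν ≤ upperDensity {k : ℕ | δ ≤ ρ (f^[k] x) (f^[k] y)}

/-- The asymptotic separation number `Sep(f,δ,ν)` of `f` on `X`. -/
def sepNum {α : Type*} (ρ : α → α → ℝ) (f : α → α) (X : Set α) (δ ν : ℝ) : ℕ∞ :=
  ⨆ (S : Set α) (_ : IsSepSet ρ f X δ ν S), S.encard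

/-- The quantity `log s / (- log ν)`, with value `∞` if `s = ∞`. -/
def logRatio (s : ℕ∞) (ν : ℝ) : ℝ≥0∞ :=
  if s = ⊤ then ⊤ else ENNReal.ofReal (Real.log (s.toNat : ℝ) / (- Real.log ν))

/-- The lower amorphic complexity of `f` on `X`. -/
def acLower {α : Type*} (ρ : α → α → ℝ) (f : α → α) (X : Set α) : ℝ≥0∞ :=
  ⨆ (δ : ℝ) (_ : 0 < δ),
    Filter.liminf (fun ν : ℝ => logRatio (sepNum ρ f X δ ν) ν) (𝓝[>] (0 : ℝ))

/-- The upper amorphic complexity of `f` on `X`. -/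
def acUpper {α : Type*} (ρ : α → α → ℝ) (f : α → α) (X : Set α) : ℝ≥0∞ :=
  ⨆ (δ : ℝ) (_ : 0 < δ),
    Filter.limsup (fun ν : ℝ => logRatio (sepNum ρ f X δ ν) ν) (𝓝[>] (0 : ℝ))

/-- The left shift on `A^ℤ`. -/
def shift {A : Type*} (x : ℤ → A) : ℤ → A := fun n => x (n + 1)

open scoped Classical in
/-- The Cantor metric `d(x,y) = 2^{-min{|k| : x_k ≠ y_k}}` on `A^ℤ`. -/
def cantorDist {A : Type*} (x y : ℤ → A) : ℝ :=
  if x = y then 0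
  else (2 : ℝ) ^ (-((sInf {n : ℕ | ∃ k : ℤ, k.natAbs = n ∧ x k ≠ y k} : ℕ) : ℤ))

/-- The Besicovitch pseudometric `D_1` on `A^ℤ`. -/
def besD1 {A : Type*} (x y : ℤ → A) : ℝ :=
  upperDensity {k : ℕ | x (k : ℤ) ≠ y (k : ℤ)}

/-- The Besicovitch pseudometric `D_B` associated to a map `f` and a distance `ρ`. -/
def besDB {α : Type*} (ρ : α → α → ℝ) (f : α → α) (x y : α) : ℝ :=
  Filter.limsup (fun n : ℕ => (∑ k ∈ Finset.range n, ρ (f^[k] x) (f^[k] y)) / n) Filter.atTop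

/-- The pseudometric `D_δ` on `A^ℤ` associated to a metric `ρ` on `A^ℤ`. -/
def Ddelta {A : Type*} (ρ : (ℤ → A) → (ℤ → A) → ℝ) (δ : ℝ) (x y : ℤ → A) : ℝ :=
  upperDensity {k : ℕ | δ ≤ ρ (shift^[k] x) (shift^[k] y)}

/-- The closure of the two-sided shift orbit of `x₀`. -/
def orbitClosure {A : Type*} [TopologicalSpace A] (x₀ : ℤ → A) : Set (ℤ → A) :=
  closure {y | ∃ k : ℤ, y = fun n => x₀ (n + k)}

/-- The extension of a constant length substitution `θ : A → A^ℓ` to `A^ℤ`,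
via `θ(x)_{ℓk+i} = θ(x_k)_i`. -/
def substApply {A : Type*} {ℓ : ℕ} (hℓ : 0 < ℓ) (θ : A → Fin ℓ → A)
    (x : ℤ → A) : ℤ → A := fun n =>
  θ (x (n / (ℓ : ℤ))) ⟨(n % (ℓ : ℤ)).toNat, by
    have h1 : 0 ≤ n % (ℓ : ℤ) := Int.emod_nonneg n (by exact_mod_cast hℓ.ne')
    have h2 : n % (ℓ : ℤ) < (ℓ : ℤ) := Int.emod_lt_of_pos n (by exact_mod_cast hℓ)
    omega⟩

/-- A constant length substitution is primitive if some power `θ^m` of it is such that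
every letter `b` occurs in every word `θ^m(a)`. -/
def IsPrimitive {A : Type*} {ℓ : ℕ} (hℓ : 0 < ℓ) (θ : A → Fin ℓ → A) : Prop :=
  ∃ m : ℕ, 1 ≤ m ∧ ∀ a b : A, ∃ j : ℤ, 0 ≤ j ∧ j < (ℓ : ℤ) ^ m ∧
    (substApply hℓ θ)^[m] (fun _ => a) j = b

open scoped Classical in
/-- The number of positions at which the words `θ(a)` and `θ(b)` agree. -/
def coincCount {A : Type*} {ℓ : ℕ} (θ : A → Fin ℓ → A) (a b : A) : ℕ :=
  (Finset.univ.filter (fun j : Fin ℓ => θ a j = θ b j)).card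

/-- `c(θ)`, the minimum of `coincCount θ a b` over pairs `a ≠ b`. -/
def cMin {A : Type*} {ℓ : ℕ} (θ : A → Fin ℓ → A) : ℕ :=
  sInf {n : ℕ | ∃ a b : A, a ≠ b ∧ coincCount θ a b = n}

/-- `C(θ)`, the maximum of `coincCount θ a b` over pairs `a ≠ b`. -/
def cMax {A : Type*} {ℓ : ℕ} (θ : A → Fin ℓ → A) : ℕ :=
  sSup {n : ℕ | ∃ a b : A, a ≠ b ∧ coincCount θ a b = n}

/-- `S` is `ε`-separated with respect to the distance `ρ`. -/
def IsEpsSeparated {α : Type*} (ρ : α → α → ℝ) (ε : ℝ) (S : Set α) : Prop :=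
  ∀ x ∈ S, ∀ y ∈ S, x ≠ y → ε ≤ ρ x y

/-- `M_ε(E)`: the maximal cardinality of an `ε`-separated subset of `E`. -/
def packNum {α : Type*} (ρ : α → α → ℝ) (ε : ℝ) (E : Set α) : ℕ∞ :=
  ⨆ (S : Set α) (_ : S ⊆ E ∧ IsEpsSeparated ρ ε S), S.encard

/-- The lower box dimension of `E` with respect to the distance `ρ`. -/
def lowerBoxDim {α : Type*} (ρ : α → α → ℝ) (E : Set α) : ℝ≥0∞ :=
  Filter.liminf (fun ε : ℝ => logRatio (packNum ρ ε E) ε) (𝓝[>] (0 : ℝ))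

/-- The upper box dimension of `E` with respect to the distance `ρ`. -/
def upperBoxDim {α : Type*} (ρ : α → α → ℝ) (E : Set α) : ℝ≥0∞ :=
  Filter.limsup (fun ε : ℝ => logRatio (packNum ρ ε E) ε) (𝓝[>] (0 : ℝ))

/-- Mean equicontinuity of `f` on `X` with respect to the distance `ρ`. -/
def MeanEquicontinuousOn {α : Type*} (ρ : α → α → ℝ) (f : α → α) (X : Set α) : Prop :=
  ∀ ν : ℝ, 0 < ν → ∃ δ : ℝ, 0 < δ ∧ ∀ x ∈ X, ∀ y ∈ X, ρ x y < δ → besDB ρ f x y < ν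

/-- The subshift `X` has discrete spectrum: for every shift-invariant Borel probability
measure giving `X` full measure (there is exactly one for the systems under consideration),
`L²` has a Hilbert basis of eigenfunctions of the shift. -/
def HasDiscreteSpectrum {A : Type*} [MeasurableSpace A] (X : Set (ℤ → A)) : Prop :=
  ∀ μ : Measure (ℤ → A), IsProbabilityMeasure μ → MeasurePreserving shift μ μ → μ X = 1 →
    ∃ (ι : Type) (b : HilbertBasis ι ℂ (Lp ℂ 2 μ)), ∀ i : ι, ∃ c : ℂ,
      (fun z => (b i : Lp ℂ 2 μ) (shift z)) =ᵐ[μ] (fun z => c * (b i : Lp ℂ 2 μ) z)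

end

/-!
`D_1` and `D_B` are uniformly equivalent pseudometrics: for every `m`,
`D_1(x, y) ≤ D_B(x, y) ≤ 2⁻ᵐ + (2m + 1) D_1(x, y)`.
The first inequality holds because `d(σᵏx, σᵏy) = 1` as soon as `x_k ≠ y_k`. For the second,
`d(σᵏx, σᵏy)` exceeds `2⁻ᵐ` only if `x` and `y` differ at `k + j` for some `|j| ≤ m`, and each of
these `2m + 1` translates of the discrepancy set has upper density `D_1(x, y)`. Mean
equicontinuity therefore says that `x ↦ [x]` is uniformly continuous on `X`, which by the
Heine–Cantor theorem is the same as continuity when `X` is compact.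
-/

section UpperMean

/-- The upper Cesàro mean `limsup (f 0 + ⋯ + f (n - 1)) / n` of a real sequence. Both
`upperDensity` and `besDB` are instances of it by definition. The `limsup` has its usual meaning
only when the averages are bounded. -/
noncomputable def upperMean (f : ℕ → ℝ) : ℝ :=
  limsup (fun n : ℕ => (∑ k ∈ Finset.range n, f k) / n) atTop

variable {f g : ℕ → ℝ} {C D : ℝ}

lemma abs_sum_range_div_le (hf : ∀ k, |f k| ≤ C) (n : ℕ) :
    |(∑ k ∈ Finset.range n, f k) / n| ≤ C := by
  rw [abs_div, Nat.abs_cast]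
  refine div_le_of_le_mul₀ n.cast_nonneg ((abs_nonneg _).trans (hf 0)) ?_
  calc |∑ k ∈ Finset.range n, f k|
      ≤ ∑ k ∈ Finset.range n, |f k| := Finset.abs_sum_le_sum_abs _ _
    _ ≤ (Finset.range n).card • C := Finset.sum_le_card_nsmul _ _ _ fun k _ => hf k
    _ = C * n := by rw [Finset.card_range, nsmul_eq_mul, mul_comm]

lemma isBoundedUnder_le_sum_range_div (hf : ∀ k, |f k| ≤ C) :
    IsBoundedUnder (· ≤ ·) atTop fun n : ℕ => (∑ k ∈ Finset.range n, f k) / n :=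
  isBoundedUnder_of ⟨C, fun n => (abs_le.mp (abs_sum_range_div_le hf n)).2⟩

lemma isBoundedUnder_ge_sum_range_div (hf : ∀ k, |f k| ≤ C) :
    IsBoundedUnder (· ≥ ·) atTop fun n : ℕ => (∑ k ∈ Finset.range n, f k) / n :=
  isBoundedUnder_of ⟨-C, fun n => (abs_le.mp (abs_sum_range_div_le hf n)).1⟩

lemma upperMean_mono (hf : ∀ k, |f k| ≤ C) (hg : ∀ k, |g k| ≤ D) (hfg : ∀ k, f k ≤ g k) :
    upperMean f ≤ upperMean g :=
  limsup_le_limsup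
    (.of_forall fun n =>
      div_le_div_of_nonneg_right (Finset.sum_le_sum fun k _ => hfg k) n.cast_nonneg)
    (isBoundedUnder_ge_sum_range_div hf).isCoboundedUnder_le
    (isBoundedUnder_le_sum_range_div hg)

lemma upperMean_add_le (hf : ∀ k, |f k| ≤ C) (hg : ∀ k, |g k| ≤ D) :
    upperMean (fun k => f k + g k) ≤ upperMean f + upperMean g := by
  simp only [upperMean, Finset.sum_add_distrib, add_div]
  exact limsup_add_le (isBoundedUnder_ge_sum_range_div hf) (isBoundedUnder_le_sum_range_div hf)
    (isBoundedUnder_ge_sum_range_div hg).isCoboundedUnder_le (isBoundedUnder_le_sum_range_div hg)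

lemma upperMean_const (c : ℝ) : upperMean (fun _ => c) = c := by
  refine (tendsto_const_nhds.congr' ?_).limsup_eq
  filter_upwards [eventually_ne_atTop 0] with n hn
  rw [Finset.sum_const, Finset.card_range, nsmul_eq_mul,
    mul_div_cancel_left₀ c (Nat.cast_ne_zero.mpr hn)]

lemma upperMean_succ_sub (hf : ∀ k, |f k| ≤ C) : upperMean (fun k => f (k + 1) - f k) = 0 := by
  refine Tendsto.limsup_eq ?_
  simp only [Finset.sum_range_sub]
  refine squeeze_zero_norm (fun n => ?_) (tendsto_const_div_atTop_nhds_zero_nat (C + C))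
  rw [Real.norm_eq_abs, abs_div, Nat.abs_cast]
  gcongr
  exact (abs_sub _ _).trans (add_le_add (hf n) (hf 0))

lemma upperMean_comp_succ (hf : ∀ k, |f k| ≤ C) : upperMean (fun k => f (k + 1)) = upperMean f := by
  have hf_succ : ∀ k, |f (k + 1)| ≤ C := fun k => hf (k + 1)
  have abs_sub_le {u v : ℕ → ℝ} (hu : ∀ k, |u k| ≤ C) (hv : ∀ k, |v k| ≤ C) (k : ℕ) :
      |u k - v k| ≤ C + C := (abs_sub _ _).trans (add_le_add (hu k) (hv k))
  apply le_antisymm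
  · calc upperMean (fun k => f (k + 1))
        = upperMean (fun k => f k + (f (k + 1) - f k)) := by simp only [add_sub_cancel]
      _ ≤ upperMean f + upperMean (fun k => f (k + 1) - f k) :=
          upperMean_add_le hf (abs_sub_le hf_succ hf)
      _ = upperMean f := by rw [upperMean_succ_sub hf, add_zero]
  · have hneg : upperMean (fun k => f k - f (k + 1)) = 0 := by
      simpa only [neg_sub_neg] using
        upperMean_succ_sub (f := fun k => -f k) fun k => (abs_neg (f k)).trans_le (hf k)
    calc upperMean f
        = upperMean (fun k => f (k + 1) + (f k - f (k + 1))) := by simp only [add_sub_cancel]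
      _ ≤ upperMean (fun k => f (k + 1)) + upperMean (fun k => f k - f (k + 1)) :=
          upperMean_add_le hf_succ (abs_sub_le hf hf_succ)
      _ = upperMean (fun k => f (k + 1)) := by rw [hneg, add_zero]

end UpperMean

section UpperDensity

lemma abs_indicator_one_le {α : Type*} (E : Set α) (k : α) :
    |E.indicator (fun _ => (1 : ℝ)) k| ≤ 1 := by
  by_cases hk : k ∈ E <;> simp [hk]

lemma upperDensity_empty : upperDensity ∅ = 0 := by
  rw [upperDensity, indicator_empty]
  exact upperMean_const 0

lemma upperDensity_mono {E F : Set ℕ} (h : E ⊆ F) : upperDensity E ≤ upperDensity F :=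
  upperMean_mono (abs_indicator_one_le E) (abs_indicator_one_le F)
    (indicator_le_indicator_of_subset h fun _ => zero_le_one)

lemma upperDensity_union_le (E F : Set ℕ) :
    upperDensity (E ∪ F) ≤ upperDensity E + upperDensity F := by
  have hadd (k : ℕ) : |E.indicator (fun _ => (1 : ℝ)) k + F.indicator (fun _ => 1) k| ≤ 1 + 1 :=
    (abs_add_le _ _).trans (add_le_add (abs_indicator_one_le E k) (abs_indicator_one_le F k))
  refine (upperMean_mono (abs_indicator_one_le _) hadd fun k => ?_).trans
    (upperMean_add_le (abs_indicator_one_le E) (abs_indicator_one_le F))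
  by_cases hE : k ∈ E <;> by_cases hF : k ∈ F <;> simp [hE, hF]

lemma upperDensity_biUnion_le {ι : Type*} (s : Finset ι) (E : ι → Set ℕ) :
    upperDensity (⋃ i ∈ s, E i) ≤ ∑ i ∈ s, upperDensity (E i) := by
  classical
  induction s using Finset.induction_on with
  | empty => simp [upperDensity_empty]
  | insert i s hi ih =>
    rw [Finset.set_biUnion_insert, Finset.sum_insert hi]
    exact (upperDensity_union_le _ _).trans (by gcongr)

lemma upperDensity_preimage_succ (E : Set ℕ) : upperDensity (Nat.succ ⁻¹' E) = upperDensity E := by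
  have hE (k : ℕ) : (Nat.succ ⁻¹' E).indicator (fun _ => (1 : ℝ)) k =
      E.indicator (fun _ => 1) (k + 1) := rfl
  simp only [upperDensity, hE]
  exact upperMean_comp_succ (abs_indicator_one_le E)

lemma upperDensity_translate (E : Set ℤ) (j : ℤ) :
    upperDensity {k : ℕ | (k + j : ℤ) ∈ E} = upperDensity {k : ℕ | (k : ℤ) ∈ E} := by
  have translate_succ (i : ℤ) :
      upperDensity {k : ℕ | (k + (i + 1) : ℤ) ∈ E} = upperDensity {k : ℕ | (k + i : ℤ) ∈ E} := by
    rw [← upperDensity_preimage_succ {k : ℕ | (k + i : ℤ) ∈ E}]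
    simp only [preimage_ofPred_eq, Nat.cast_succ, add_assoc, add_comm 1 i]
  induction j using Int.induction_on with
  | zero => simp only [add_zero]
  | succ i ih => rw [translate_succ, ih]
  | pred i ih => rw [← translate_succ, sub_add_cancel, ih]

end UpperDensity

section CantorDist

variable {A : Type*}

lemma iterate_shift_apply (x : ℤ → A) (k : ℕ) (i : ℤ) : shift^[k] x i = x (k + i) := by
  induction k generalizing x with
  | zero => simp
  | succ k ih =>
    rw [Function.iterate_succ_apply, ih, shift]
    congr 1
    push_cast
    ring

lemma cantorDist_self (x : ℤ → A) : cantorDist x x = 0 := if_pos rfl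

lemma exists_ne_cantorDist_eq {x y : ℤ → A} (h : x ≠ y) :
    ∃ k : ℤ, x k ≠ y k ∧ (∀ i : ℤ, i.natAbs < k.natAbs → x i = y i) ∧
      cantorDist x y = (1 / 2) ^ k.natAbs := by
  set S : Set ℕ := {n | ∃ k : ℤ, k.natAbs = n ∧ x k ≠ y k}
  have hS : S.Nonempty := by
    obtain ⟨k, hk⟩ := Function.ne_iff.mp h
    exact ⟨_, k, rfl, hk⟩
  obtain ⟨k, hk, hxy⟩ := Nat.sInf_mem hS
  refine ⟨k, hxy, fun i hi => ?_, ?_⟩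
  · by_contra hne
    have hmem : i.natAbs ∈ S := ⟨i, rfl, hne⟩
    exact Nat.notMem_of_lt_sInf (hk ▸ hi) hmem
  · rw [cantorDist, if_neg h, ← hk, zpow_neg, zpow_natCast, one_div, inv_pow]

lemma cantorDist_lt_iff {x y : ℤ → A} {N : ℕ} :
    cantorDist x y < (1 / 2) ^ N ↔ ∀ k : ℤ, k.natAbs ≤ N → x k = y k := by
  rcases eq_or_ne x y with rfl | h
  · simp [cantorDist_self]
  obtain ⟨k, hk, hmin, hdist⟩ := exists_ne_cantorDist_eq h
  rw [hdist, pow_lt_pow_iff_right_of_lt_one₀ (by norm_num) (by norm_num)]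
  refine ⟨fun hN i hi => hmin i (hi.trans_lt hN), fun hN => ?_⟩
  by_contra! hkN
  exact hk (hN k hkN)

lemma cantorDist_nonneg (x y : ℤ → A) : 0 ≤ cantorDist x y := by
  unfold cantorDist
  split_ifs <;> positivity

lemma cantorDist_le_one (x y : ℤ → A) : cantorDist x y ≤ 1 := by
  rcases eq_or_ne x y with rfl | h
  · simp [cantorDist_self]
  · obtain ⟨k, -, -, hdist⟩ := exists_ne_cantorDist_eq h
    exact hdist ▸ pow_le_one₀ (by norm_num) (by norm_num)

lemma abs_cantorDist_le_one (x y : ℤ → A) : |cantorDist x y| ≤ 1 := by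
  rw [abs_of_nonneg (cantorDist_nonneg x y)]
  exact cantorDist_le_one x y

lemma cantorDist_comm (x y : ℤ → A) : cantorDist x y = cantorDist y x := by
  rcases eq_or_ne x y with rfl | h
  · rfl
  · simp only [cantorDist, if_neg h, if_neg h.symm, ne_comm]

lemma cantorDist_triangle (x y z : ℤ → A) :
    cantorDist x z ≤ cantorDist x y + cantorDist y z := by
  rcases eq_or_ne x z with rfl | h
  · rw [cantorDist_self]
    exact add_nonneg (cantorDist_nonneg _ _) (cantorDist_nonneg _ _)
  obtain ⟨k, hk, -, hdist⟩ := exists_ne_cantorDist_eq h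
  rw [hdist]
  by_contra! hlt
  have hxy : x k = y k := cantorDist_lt_iff.mp
    ((le_add_of_nonneg_right (cantorDist_nonneg y z)).trans_lt hlt) k le_rfl
  have hyz : y k = z k := cantorDist_lt_iff.mp
    ((le_add_of_nonneg_left (cantorDist_nonneg x y)).trans_lt hlt) k le_rfl
  exact hk (hxy.trans hyz)

lemma mem_nhds_iff_cantorDist [TopologicalSpace A] [DiscreteTopology A]
    {x : ℤ → A} {s : Set (ℤ → A)} :
    s ∈ 𝓝 x ↔ ∃ ε > 0, ∀ y, cantorDist x y < ε → y ∈ s := by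
  constructor
  · rw [nhds_pi, Filter.mem_pi]
    rintro ⟨I, hI, t, ht, hts⟩
    obtain ⟨N, hN⟩ := (hI.image Int.natAbs).bddAbove
    refine ⟨(1 / 2) ^ N, by positivity, fun y hy => hts fun k hk => ?_⟩
    rw [← cantorDist_lt_iff.mp hy k (hN (mem_image_of_mem _ hk))]
    exact mem_of_mem_nhds (ht k)
  · rintro ⟨ε, hε, hs⟩
    obtain ⟨N, hN⟩ := exists_pow_lt_of_lt_one hε (by norm_num : (1 / 2 : ℝ) < 1)
    have hcyl : (Icc (-(N : ℤ)) N).pi (fun k => {x k}) ∈ 𝓝 x :=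
      set_pi_mem_nhds (finite_Icc _ _) fun k _ => mem_nhds_discrete.mpr rfl
    refine mem_of_superset hcyl fun y hy => hs y (lt_trans ?_ hN)
    exact cantorDist_lt_iff.mpr fun k hk => (hy k ⟨by omega, by omega⟩).symm

/-- The Cantor metric as a structure on `A^ℤ`. Its underlying topology is, definitionally, the
product topology. -/
noncomputable abbrev cantorPseudoMetricSpace (A : Type*) [TopologicalSpace A] [DiscreteTopology A] :
    PseudoMetricSpace (ℤ → A) :=
  .ofDistTopology cantorDist cantorDist_self cantorDist_comm cantorDist_triangle fun s => by
    simp only [isOpen_iff_mem_nhds, mem_nhds_iff_cantorDist]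

end CantorDist

section Besicovitch

variable {A : Type*}

lemma besD1_self (x : ℤ → A) : besD1 x x = 0 := by
  simpa [besD1] using! upperDensity_empty

lemma besD1_comm (x y : ℤ → A) : besD1 x y = besD1 y x := by
  simp only [besD1, ne_comm]

lemma besD1_triangle (x y z : ℤ → A) : besD1 x z ≤ besD1 x y + besD1 y z := by
  refine (upperDensity_mono fun k hxz => ?_).trans (upperDensity_union_le _ _)
  by_contra h
  obtain ⟨hxy, hyz⟩ : x k = y k ∧ y k = z k := by simpa [not_or] using h
  exact hxz (hxy.trans hyz)

/-- The Besicovitch pseudometric `D_1` as a structure on `A^ℤ`, from which `[Σ]` is formed.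
It is not an instance because `A^ℤ` already carries the product topology. -/
noncomputable abbrev besicovitchPseudoMetricSpace (A : Type*) : PseudoMetricSpace (ℤ → A) where
  dist := besD1
  dist_self := besD1_self
  dist_comm := besD1_comm
  dist_triangle := besD1_triangle

/-- The Besicovitch space `[Σ]`: the quotient of `A^ℤ` by the relation `D_1(x, y) = 0`. -/
def BesicovitchSpace (A : Type*) : Type _ :=
  @SeparationQuotient (ℤ → A) (besicovitchPseudoMetricSpace A).toUniformSpace.toTopologicalSpace

noncomputable instance (A : Type*) : MetricSpace (BesicovitchSpace A) :=
  @SeparationQuotient.instMetricSpace _ (besicovitchPseudoMetricSpace A)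

/-- The quotient map `x ↦ [x]` onto the Besicovitch space. -/
noncomputable def besicovitchMk (x : ℤ → A) : BesicovitchSpace A :=
  @SeparationQuotient.mk _ (besicovitchPseudoMetricSpace A).toUniformSpace.toTopologicalSpace x

lemma dist_besicovitchMk (x y : ℤ → A) :
    dist (besicovitchMk x) (besicovitchMk y) = besD1 x y := rfl

lemma besD1_le_besDB (x y : ℤ → A) : besD1 x y ≤ besDB cantorDist shift x y := by
  refine upperMean_mono (abs_indicator_one_le _) (fun k => abs_cantorDist_le_one _ _)
    (indicator_le' (fun k hk => ?_) fun k _ => cantorDist_nonneg _ _)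
  by_contra! hlt
  have hagree : shift^[k] x 0 = shift^[k] y 0 :=
    cantorDist_lt_iff (N := 0).mp (by simpa using hlt) 0 le_rfl
  simp only [iterate_shift_apply, add_zero] at hagree
  exact hk hagree

lemma cantorDist_iterate_shift_le (x y : ℤ → A) (m k : ℕ) :
    cantorDist (shift^[k] x) (shift^[k] y) ≤ (1 / 2) ^ m +
      (⋃ j ∈ Finset.Icc (-m : ℤ) m, {k : ℕ | x (k + j) ≠ y (k + j)}).indicator (fun _ => 1) k := by
  by_cases hk : k ∈ ⋃ j ∈ Finset.Icc (-m : ℤ) m, {k : ℕ | x (k + j) ≠ y (k + j)}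
  · rw [indicator_of_mem hk]
    exact (cantorDist_le_one _ _).trans (le_add_of_nonneg_left (by positivity))
  · rw [indicator_of_notMem hk, add_zero]
    refine (cantorDist_lt_iff.mpr fun j hj => ?_).le
    rw [iterate_shift_apply, iterate_shift_apply]
    by_contra hne
    exact hk (mem_biUnion (Finset.mem_Icc.mpr ⟨by omega, by omega⟩) hne)

lemma besDB_cantorDist_shift_le (x y : ℤ → A) (m : ℕ) :
    besDB cantorDist shift x y ≤ (1 / 2) ^ m + (2 * m + 1) * besD1 x y := by
  set E : ℤ → Set ℕ := fun j => {k | x (k + j) ≠ y (k + j)}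
  have hconst (_ : ℕ) : |(1 / 2 : ℝ) ^ m| ≤ (1 / 2) ^ m := (abs_of_nonneg (by positivity)).le
  have hind := abs_indicator_one_le (⋃ j ∈ Finset.Icc (-m : ℤ) m, E j)
  calc besDB cantorDist shift x y
      ≤ upperMean fun k =>
          (1 / 2) ^ m + (⋃ j ∈ Finset.Icc (-m : ℤ) m, E j).indicator (fun _ => 1) k :=
        upperMean_mono (fun k => abs_cantorDist_le_one _ _)
          (fun k => (abs_add_le _ _).trans (add_le_add (hconst k) (hind k)))
          (cantorDist_iterate_shift_le x y m)
    _ ≤ (1 / 2) ^ m + upperDensity (⋃ j ∈ Finset.Icc (-m : ℤ) m, E j) := by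
        simpa only [upperMean_const] using! upperMean_add_le hconst hind
    _ ≤ (1 / 2) ^ m + ∑ j ∈ Finset.Icc (-m : ℤ) m, upperDensity (E j) := by
        gcongr
        exact upperDensity_biUnion_le _ _
    _ = (1 / 2) ^ m + ∑ _j ∈ Finset.Icc (-m : ℤ) m, besD1 x y := by
        congr! 2 with j
        exact upperDensity_translate {k | x k ≠ y k} j
    _ = (1 / 2) ^ m + (2 * m + 1) * besD1 x y := by
        have hcard : ((m : ℤ) + 1 - -m).toNat = 2 * m + 1 := by omega
        rw [Finset.sum_const, Int.card_Icc, hcard, nsmul_eq_mul]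
        push_cast
        rfl

end Besicovitch

section QuotientMap

variable {A : Type*} [TopologicalSpace A] [DiscreteTopology A] {X : Set (ℤ → A)}

attribute [local instance] cantorPseudoMetricSpace

lemma continuousOn_besicovitchMk_iff :
    ContinuousOn besicovitchMk X ↔ ∀ x ∈ X, ∀ ε : ℝ, 0 < ε → ∃ δ : ℝ, 0 < δ ∧
      ∀ y ∈ X, cantorDist x y < δ → besD1 x y < ε := by
  refine Metric.continuousOn_iff.trans (forall₂_congr fun x _ => ?_)
  simp only [dist_besicovitchMk, besD1_comm _ x, dist_comm _ x]
  rfl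

lemma meanEquicontinuousOn_iff_uniformContinuousOn_besicovitchMk :
    MeanEquicontinuousOn cantorDist shift X ↔ UniformContinuousOn besicovitchMk X := by
  rw [Metric.uniformContinuousOn_iff]
  constructor
  · intro hX ε hε
    obtain ⟨δ, hδ, hX⟩ := hX ε hε
    exact ⟨δ, hδ, fun x hx y hy hxy => (besD1_le_besDB x y).trans_lt (hX x hx y hy hxy)⟩
  · intro hX ν hν
    obtain ⟨m, hm⟩ := exists_pow_lt_of_lt_one (half_pos hν) (by norm_num : (1 / 2 : ℝ) < 1)
    obtain ⟨δ, hδ, hX⟩ := hX (ν / 2 / (2 * m + 1)) (by positivity)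
    refine ⟨δ, hδ, fun x hx y hy hxy => ?_⟩
    have hD1 : (2 * m + 1) * besD1 x y < ν / 2 :=
      (lt_div_iff₀' (by positivity)).mp (hX x hx y hy hxy)
    calc besDB cantorDist shift x y
        ≤ (1 / 2) ^ m + (2 * m + 1) * besD1 x y := besDB_cantorDist_shift_le x y m
      _ < ν / 2 + ν / 2 := add_lt_add hm hD1
      _ = ν := add_halves ν

theorem mean_equicontinuous_iff_quotient_map_continuous_general (hX : IsCompact X) :
    MeanEquicontinuousOn cantorDist shift X ↔
      ∀ x ∈ X, ∀ ε : ℝ, 0 < ε → ∃ δ : ℝ, 0 < δ ∧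
        ∀ y ∈ X, cantorDist x y < δ → besD1 x y < ε := by
  rw [meanEquicontinuousOn_iff_uniformContinuousOn_besicovitchMk,
    ← continuousOn_besicovitchMk_iff]
  exact ⟨UniformContinuousOn.continuousOn, hX.uniformContinuousOn_of_continuous⟩

end QuotientMap

/-- A subshift `(X,σ)` is mean equicontinuous if and only if the
quotient map `x ↦ [x]` into the Besicovitch space `([Σ],D_1)` is continuous on `X`. -/
theorem mean_equicontinuous_iff_quotient_map_continuous
    {A : Type} [Fintype A] [TopologicalSpace A] [DiscreteTopology A]
    (X : Set (ℤ → A)) (hne : X.Nonempty) (hcl : IsClosed X) (hinv : shift '' X = X) :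
    MeanEquicontinuousOn cantorDist shift X ↔
      ∀ x ∈ X, ∀ ε : ℝ, 0 < ε → ∃ δ : ℝ, 0 < δ ∧
        ∀ y ∈ X, cantorDist x y < δ → besD1 x y < ε :=
  mean_equicontinuous_iff_quotient_map_continuous_general hcl.isCompact
end

section
/- Let (X,σ) be a subshift of Σ = A^ℤ and let X_0,…,X_{m−1} ⊆ X be a cyclic σ^n-minimal partition of X for some m,n ≥ 1: the X_i are pairwise disjoint, closed, σ^n-minimal, their union is X, σ(X_{i−1}) = X_i for 1 ≤ i < m and σ(X_{m−1}) = X_0. Then in the Besicovitch space, [X] = ⋃_{i=0}^{m−1} [X_i] = ⋃_{i=0}^{m−1} σ^i([X_0]), and the sets [X_0],…,[X_{m−1}] are pairwise disjoint. -/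
open Filter Topology Set MeasureTheory
open scoped ENNReal

/-!
Compactness turns disjointness of the `X_i` into a uniform window: there is `N` such that points
of two different `X_i` already differ at some position `t` with `|t| ≤ N`. The shift permutes the
`X_i`, so the orbits of `x ∈ X_i` and `y ∈ X_j` with `i ≠ j` stay in different members of the
partition forever. Hence `x` and `y` differ somewhere in every block of `2 * N + 1` consecutive
positions, and `D_1(x, y) ≥ 1 / (2 * N + 1)`.
-/

section UpperDensity

theorem sum_indicator_one_range_div_le_one (E : Set ℕ) (n : ℕ) :
    (∑ k ∈ Finset.range n, E.indicator (fun _ => (1 : ℝ)) k) / n ≤ 1 := by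
  refine div_le_one_of_le₀ ?_ n.cast_nonneg
  calc ∑ k ∈ Finset.range n, E.indicator (fun _ => (1 : ℝ)) k
      ≤ ∑ _k ∈ Finset.range n, (1 : ℝ) :=
        Finset.sum_le_sum fun _ _ => indicator_le_self' (fun _ _ => zero_le_one) _
    _ = n := by simp

variable {E : Set ℕ} {L : ℕ}

theorem le_sum_indicator_one_range_mul (hE : ∀ k, ∃ t < L, k + t ∈ E) (q : ℕ) :
    (q : ℝ) ≤ ∑ k ∈ Finset.range (q * L), E.indicator (fun _ => (1 : ℝ)) k := by
  induction q with
  | zero => simp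
  | succ q ih =>
    obtain ⟨t, ht, hmem⟩ := hE (q * L)
    have one_le_block :
        1 ≤ ∑ t ∈ Finset.range L, E.indicator (fun _ => (1 : ℝ)) (q * L + t) :=
      calc (1 : ℝ) = E.indicator (fun _ => 1) (q * L + t) :=
            (indicator_of_mem hmem fun _ => (1 : ℝ)).symm
        _ ≤ _ := Finset.single_le_sum (f := fun t => E.indicator (fun _ => (1 : ℝ)) (q * L + t))
            (fun _ _ => indicator_nonneg (fun _ _ => zero_le_one) _) (Finset.mem_range.2 ht)
    rw [add_mul, one_mul, Finset.sum_range_add]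
    push_cast
    exact add_le_add ih one_le_block

theorem inv_le_upperDensity_of_forall_exists_add_mem (hE : ∀ k, ∃ t < L, k + t ∈ E) :
    (L : ℝ)⁻¹ ≤ upperDensity E := by
  have hL : 0 < L := let ⟨_, ht, _⟩ := hE 0; Nat.zero_lt_of_lt ht
  refine le_limsup_of_frequently_le (frequently_atTop.2 fun a => ⟨(a + 1) * L, ?_, ?_⟩)
    (isBoundedUnder_of ⟨1, sum_indicator_one_range_div_le_one E⟩)
  · exact a.le_succ.trans (Nat.le_mul_of_pos_right _ hL)
  · calc (L : ℝ)⁻¹ = ((a + 1 : ℕ) : ℝ) / ((a + 1) * L : ℕ) := by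
          push_cast
          field_simp
      _ ≤ _ := by
          gcongr
          exact le_sum_indicator_one_range_mul hE (a + 1)

end UpperDensity

theorem exists_finset_forall_exists_ne_of_isCompact {ι : Type*} {B : ι → Type*}
    [∀ i, TopologicalSpace (B i)] [∀ i, T2Space (B i)] {C : Set ((∀ i, B i) × (∀ i, B i))}
    (hC : IsCompact C) (hne : ∀ p ∈ C, p.1 ≠ p.2) :
    ∃ s : Finset ι, ∀ p ∈ C, ∃ i ∈ s, p.1 i ≠ p.2 i := by
  obtain ⟨s, hs⟩ := hC.elim_finite_subcover
    (fun i => {p : (∀ i, B i) × (∀ i, B i) | p.1 i ≠ p.2 i})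
    (fun i => isOpen_ne_fun (by fun_prop) (by fun_prop))
    (fun p hp => mem_iUnion.2 (Function.ne_iff.1 (hne p hp)))
  exact ⟨s, fun p hp => by simpa using hs hp⟩

section Iterate

variable {α : Type*} {f : α → α}

theorem mapsTo_iterate_of_forall_mapsTo {ι : Type*} {Y : ι → Set α} {π : ι → ι}
    (h : ∀ i, MapsTo f (Y i) (Y (π i))) (k : ℕ) (i : ι) :
    MapsTo f^[k] (Y i) (Y (π^[k] i)) := by
  induction k generalizing i with
  | zero => exact mapsTo_id _
  | succ k ih => exact (ih (π i)).comp (h i)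

theorem mapsTo_finRotate {m : ℕ} {Y : ℕ → Set α}
    (hsucc : ∀ i, i + 1 < m → MapsTo f (Y i) (Y (i + 1))) (hlast : MapsTo f (Y (m - 1)) (Y 0))
    (i : Fin m) : MapsTo f (Y i) (Y (finRotate m i)) := by
  cases m with
  | zero => exact i.elim0
  | succ m =>
    obtain rfl | hi := eq_or_ne i (Fin.last m)
    · simpa using hlast
    · rw [coe_finRotate_of_ne_last hi]
      exact hsucc i (Nat.succ_lt_succ (Fin.val_lt_last hi))

theorem eq_image_iterate_of_image_eq_succ {m : ℕ} {Y : ℕ → Set α}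
    (h : ∀ i, i + 1 < m → f '' Y i = Y (i + 1)) {i : ℕ} (hi : i < m) :
    Y i = f^[i] '' Y 0 := by
  induction i with
  | zero => simp
  | succ i ih => rw [← h i hi, ih (i.lt_succ_self.trans hi), ← image_comp, ← Function.iterate_succ']

end Iterate

section Shift

variable {A : Type*}

theorem shift_iterate_apply (k : ℕ) (x : ℤ → A) (t : ℤ) : shift^[k] x t = x (t + k) := by
  induction k generalizing x with
  | zero => simp
  | succ k ih =>
    rw [Function.iterate_succ_apply, ih, shift]
    congr 1
    push_cast
    ring

variable [TopologicalSpace A] [T2Space A]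

theorem exists_pos_le_besD1_of_isCompact {C : Set ((ℤ → A) × (ℤ → A))} (hC : IsCompact C)
    (hne : ∀ p ∈ C, p.1 ≠ p.2) :
    ∃ δ > 0, ∀ x y, (∀ k, (shift^[k] x, shift^[k] y) ∈ C) → δ ≤ besD1 x y := by
  obtain ⟨s, hs⟩ := exists_finset_forall_exists_ne_of_isCompact hC hne
  let N := s.sup Int.natAbs
  refine ⟨((2 * N + 1 : ℕ) : ℝ)⁻¹, by positivity, fun x y hxy =>
    inv_le_upperDensity_of_forall_exists_add_mem fun k => ?_⟩
  obtain ⟨t, hts, hdiff⟩ := hs _ (hxy (k + N))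
  have htN : t.natAbs ≤ N := Finset.le_sup hts
  have hpos : ((k + (t + N).toNat : ℕ) : ℤ) = t + (k + N : ℕ) := by omega
  refine ⟨(t + N).toNat, by omega, ?_⟩
  simpa only [mem_ofPred_eq, hpos, shift_iterate_apply] using hdiff

theorem exists_pos_le_besD1_of_pairwise_disjoint {ι : Type*} [Finite ι] {Y : ι → Set (ℤ → A)}
    {π : ι → ι} (hπ : Function.Injective π) (hcompact : ∀ i, IsCompact (Y i))
    (hdisj : Pairwise (Function.onFun Disjoint Y)) (hmaps : ∀ i, MapsTo shift (Y i) (Y (π i))) :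
    ∃ δ > 0, ∀ i j, i ≠ j → ∀ x ∈ Y i, ∀ y ∈ Y j, δ ≤ besD1 x y := by
  let C := ⋃ p : {p : ι × ι // p.1 ≠ p.2}, Y p.1.1 ×ˢ Y p.1.2
  have hC : IsCompact C := isCompact_iUnion fun p => (hcompact _).prod (hcompact _)
  have hne : ∀ p ∈ C, p.1 ≠ p.2 := by
    intro p hp
    obtain ⟨⟨_, hij⟩, hx, hy⟩ := mem_iUnion.1 hp
    exact (hdisj hij).ne_of_mem hx hy
  obtain ⟨δ, hδ, hle⟩ := exists_pos_le_besD1_of_isCompact hC hne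
  refine ⟨δ, hδ, fun i j hij x hx y hy => hle x y fun k => mem_iUnion.2 ?_⟩
  have horbit := mapsTo_iterate_of_forall_mapsTo hmaps k
  exact ⟨⟨(π^[k] i, π^[k] j), (hπ.iterate k).ne hij⟩, horbit i hx, horbit j hy⟩

theorem besicovitch_cyclic_minimal_partition_general {m : ℕ} {Y : ℕ → Set (ℤ → A)}
    (hcompact : ∀ i < m, IsCompact (Y i))
    (hdisj : ∀ i < m, ∀ j < m, i ≠ j → Disjoint (Y i) (Y j))
    (hcyc : ∀ i, i + 1 < m → shift '' Y i = Y (i + 1))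
    (hcyc0 : MapsTo shift (Y (m - 1)) (Y 0)) :
    (∃ δ > 0, ∀ i < m, ∀ j < m, i ≠ j → ∀ x ∈ Y i, ∀ y ∈ Y j, δ ≤ besD1 x y) ∧
    (∀ i < m, Y i = shift^[i] '' Y 0) := by
  refine ⟨?_, fun i hi => eq_image_iterate_of_image_eq_succ hcyc hi⟩
  have hsucc : ∀ i, i + 1 < m → MapsTo shift (Y i) (Y (i + 1)) :=
    fun i hi => mapsTo_iff_image_subset.2 (hcyc i hi).subset
  obtain ⟨δ, hδ, hle⟩ := exists_pos_le_besD1_of_pairwise_disjoint (Y := fun i : Fin m => Y i)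
    (finRotate m).injective (fun i => hcompact i i.2)
    (fun i j hij => hdisj i i.2 j j.2 (Fin.val_ne_of_ne hij)) (mapsTo_finRotate hsucc hcyc0)
  exact ⟨δ, hδ, fun i hi j hj hij =>
    hle ⟨i, hi⟩ ⟨j, hj⟩ fun h => hij (congrArg Fin.val h)⟩

end Shift

/-- For a cyclic `σ^n`-minimal partition `X_0,…,X_{m-1}` of a subshift
`X`, the images `[X_0],…,[X_{m-1}]` in the Besicovitch space are pairwise disjoint and
`[X] = ⋃_{i<m} [X_i] = ⋃_{i<m} σ^i([X_0])`. -/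
theorem besicovitch_cyclic_minimal_partition
    {A : Type} [Fintype A] [TopologicalSpace A] [DiscreteTopology A]
    (X : Set (ℤ → A)) (hne : X.Nonempty) (hcl : IsClosed X) (hinv : shift '' X = X)
    (m n : ℕ) (hm : 1 ≤ m) (hn : 1 ≤ n) (Xs : ℕ → Set (ℤ → A))
    (hsub : ∀ i < m, Xs i ⊆ X)
    (hdisj : ∀ i < m, ∀ j < m, i ≠ j → Disjoint (Xs i) (Xs j))
    (hclosed : ∀ i < m, IsClosed (Xs i))
    (hmininv : ∀ i < m, (Xs i).Nonempty ∧ shift^[n] '' Xs i = Xs i)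
    (hmin : ∀ i < m, ∀ E ⊆ Xs i, E.Nonempty → IsClosed E → shift^[n] '' E = E → E = Xs i)
    (hcover : (⋃ i ∈ Finset.range m, Xs i) = X)
    (hcyc : ∀ i : ℕ, i + 1 < m → shift '' Xs i = Xs (i + 1))
    (hcyc0 : shift '' Xs (m - 1) = Xs 0) :
    (∀ i < m, ∀ j < m, i ≠ j → ∀ x ∈ Xs i, ∀ y ∈ Xs j, besD1 x y ≠ 0) ∧
    (∀ i < m, Xs i = shift^[i] '' Xs 0) := by
  obtain ⟨⟨δ, hδ, hle⟩, himage⟩ := besicovitch_cyclic_minimal_partition_general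
    (fun i hi => (hclosed i hi).isCompact) hdisj hcyc (mapsTo_iff_image_subset.2 hcyc0.subset)
  exact ⟨fun i hi j hj hij x hx y hy => (hδ.trans_le (hle i hi j hj hij x hx y hy)).ne', himage⟩
end
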